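/- Let J ⊂ ℝ be a nonempty bounded open interval. Then there exists a constant C > 1 (depending only on J) such that for every δ ∈ (0,1) and every differentiable g : ℝ → ℝ with derivative g′ satisfying ∫_J g(t)² dt < ∞ and ∫_J g′(t)² dt < ∞, one has ‖g‖_{L²(J)} ≤ C · ( ( ∫_J ((P_δ g)(x))² dx )^{1/2} + δ^{2/5} · ‖g‖_{L²(J)} + δ^{2/5} · ‖g′‖_{L²(J)} ). -/

import Mathlib

/-!
Write `k(s) = δ / (s² + δ²)` and `J = (c, d)`. For `x ∈ J`,
`g(x) · ∫_J k(x - t) dt = (P_δ g)(x) + ∫_J (g(x) - g(t)) k(x - t) dt`.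
The left-hand factor `∫_J k(x - t) dt` is at least `arctan ((d - c) / 2)`, because one of the two
endpoints of `J` has distance at least `(d - c) / 2` from `x` and `δ < 1`
(`arctan_le_integral_kernel`). The error term is handled pointwise:
`|g(x) - g(t)| ≤ |x - t|^{1/2} ‖g'‖` by Cauchy–Schwarz (`sq_sub_le`), and weighted AM–GM gives
`|s|^{1/2} k(s) ≤ δ^{2/5} |s|^{-9/10}` (`sqrt_mul_kernel_le`), whose right-hand side is integrable
near `0`. So `|g(x)|` is bounded by a constant times `|(P_δ g)(x)| + δ^{2/5} ‖g'‖`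
(`pointwise_bound`), and taking `L²(J)` norms yields the theorem.
-/

open MeasureTheory Set

/-- `(P_δ g)(x) = ∫_J g(t) · δ/((x - t)² + δ²) dt`, the vertical derivative at height `δ`
of the Neumann harmonic extension of `g·χ_J`. -/
noncomputable def Pdelta (J : Set ℝ) (δ : ℝ) (g : ℝ → ℝ) (x : ℝ) : ℝ :=
  ∫ t in J, g t * (δ / ((x - t) ^ 2 + δ ^ 2))

/-- Cauchy–Schwarz for the derivative: `H¹` functions on an interval are `1/2`-Hölder. -/
lemma sq_sub_le_of_lt {c d : ℝ} {g : ℝ → ℝ} (hg : Differentiable ℝ g)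
    (hg' : IntegrableOn (fun t => (deriv g t) ^ 2) (Ioo c d) volume)
    {t x : ℝ} (ht : t ∈ Ioo c d) (hx : x ∈ Ioo c d) (htx : t < x) :
    (g x - g t) ^ 2 ≤ (x - t) * ∫ s in Ioo c d, (deriv g s) ^ 2 := by
  have hsub : Ioc t x ⊆ Ioo c d := fun s hs => ⟨ht.1.trans hs.1, hs.2.trans_lt hx.2⟩
  have h2 : IntegrableOn (fun s => (deriv g s) ^ 2) (Ioc t x) := hg'.mono_set hsub
  have h1 : IntegrableOn (deriv g) (Ioc t x) := by
    have hm : MemLp (deriv g) 2 (volume.restrict (Ioc t x)) :=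
      (memLp_two_iff_integrable_sq (measurable_deriv g).aestronglyMeasurable).2 h2
    exact hm.integrable (by norm_num)
  have i2 : IntervalIntegrable (fun s => (deriv g s) ^ 2) volume t x :=
    (intervalIntegrable_iff_integrableOn_Ioc_of_le htx.le).2 h2
  have i1 : IntervalIntegrable (deriv g) volume t x :=
    (intervalIntegrable_iff_integrableOn_Ioc_of_le htx.le).2 h1
  have ftc : ∫ s in t..x, deriv g s = g x - g t :=
    intervalIntegral.integral_eq_sub_of_hasDerivAt (fun s _ => (hg s).hasDerivAt) i1
  have hle : ∫ s in t..x, (deriv g s) ^ 2 ≤ ∫ s in Ioo c d, (deriv g s) ^ 2 := by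
    rw [intervalIntegral.integral_of_le htx.le]
    exact setIntegral_mono_set hg' (Filter.Eventually.of_forall fun s => sq_nonneg _)
      hsub.eventuallyLE
  have hxt : 0 < x - t := sub_pos.2 htx
  set m := (g x - g t) / (x - t) with hm
  -- The variance of `g'` about its mean `m` on `[t, x]` is nonnegative.
  have hvar : 0 ≤ ∫ s in t..x, ((deriv g s) ^ 2 - 2 * m * deriv g s + m ^ 2) :=
    intervalIntegral.integral_nonneg htx.le fun s _ => by nlinarith [sq_nonneg (deriv g s - m)]
  rw [intervalIntegral.integral_add (i2.sub (i1.const_mul _)) intervalIntegrable_const,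
    intervalIntegral.integral_sub i2 (i1.const_mul _), intervalIntegral.integral_const_mul, ftc,
    intervalIntegral.integral_const, smul_eq_mul] at hvar
  have hmx : g x - g t = m * (x - t) := by rw [hm]; field_simp
  rw [hmx] at hvar ⊢
  have : m ^ 2 * (x - t) ≤ ∫ s in Ioo c d, (deriv g s) ^ 2 := by nlinarith
  nlinarith

lemma sq_sub_le {c d : ℝ} {g : ℝ → ℝ} (hg : Differentiable ℝ g)
    (hg' : IntegrableOn (fun t => (deriv g t) ^ 2) (Ioo c d) volume)
    {t x : ℝ} (ht : t ∈ Ioo c d) (hx : x ∈ Ioo c d) :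
    (g x - g t) ^ 2 ≤ |x - t| * ∫ s in Ioo c d, (deriv g s) ^ 2 := by
  rcases lt_trichotomy t x with h | h | h
  · rw [abs_of_pos (sub_pos.2 h)]
    exact sq_sub_le_of_lt hg hg' ht hx h
  · simp [h]
  · rw [abs_sub_comm, abs_of_pos (sub_pos.2 h), sub_sq_comm]
    exact sq_sub_le_of_lt hg hg' hx ht h

/-- Weighted AM–GM with weights `7/10` and `3/10`; these weights produce the exponent `2/5`. -/
lemma sqrt_mul_kernel_le {δ s : ℝ} (hδ : 0 < δ) (hs : s ≠ 0) :
    Real.sqrt |s| * (δ / (s ^ 2 + δ ^ 2)) ≤ δ ^ ((2 : ℝ) / 5) * |s| ^ (-(9 : ℝ) / 10) := by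
  have hs' : 0 < |s| := abs_pos.2 hs
  have amgm := Real.geom_mean_le_arith_mean2_weighted (w₁ := 7 / 10) (w₂ := 3 / 10)
    (p₁ := |s| ^ 2) (p₂ := δ ^ 2) (by norm_num) (by norm_num) (by positivity) (by positivity)
    (by norm_num)
  have hA : (|s| ^ 2) ^ ((7 : ℝ) / 10) = |s| ^ ((7 : ℝ) / 5) := by
    rw [← Real.rpow_natCast, ← Real.rpow_mul hs'.le]; norm_num
  have hB : (δ ^ 2) ^ ((3 : ℝ) / 10) = δ ^ ((3 : ℝ) / 5) := by
    rw [← Real.rpow_natCast, ← Real.rpow_mul hδ.le]; norm_num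
  rw [hA, hB, sq_abs] at amgm
  have hle : |s| ^ ((7 : ℝ) / 5) * δ ^ ((3 : ℝ) / 5) ≤ s ^ 2 + δ ^ 2 := by
    nlinarith [sq_nonneg s, sq_nonneg δ]
  have hpos : 0 < s ^ 2 + δ ^ 2 := by positivity
  have e1 : δ ^ ((2 : ℝ) / 5) * δ ^ ((3 : ℝ) / 5) = δ := by
    rw [← Real.rpow_add hδ]; norm_num
  have e2 : |s| ^ (-(9 : ℝ) / 10) * |s| ^ ((7 : ℝ) / 5) = Real.sqrt |s| := by
    rw [← Real.rpow_add hs', Real.sqrt_eq_rpow]; norm_num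
  rw [← mul_div_assoc, div_le_iff₀ hpos]
  calc Real.sqrt |s| * δ
      = (δ ^ ((2 : ℝ) / 5) * |s| ^ (-(9 : ℝ) / 10)) *
          (|s| ^ ((7 : ℝ) / 5) * δ ^ ((3 : ℝ) / 5)) := by
        linear_combination (-Real.sqrt |s|) * e1 -
          (δ ^ ((2 : ℝ) / 5) * δ ^ ((3 : ℝ) / 5)) * e2
    _ ≤ _ := by gcongr

lemma intervalIntegrable_abs_rpow (a b : ℝ) :
    IntervalIntegrable (fun s : ℝ => |s| ^ (-(9 : ℝ) / 10)) volume a b := by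
  -- On `[0, b]` the function is a power of `s`; negative endpoints follow by reflection.
  have key : ∀ b : ℝ, 0 ≤ b →
      IntervalIntegrable (fun s : ℝ => |s| ^ (-(9 : ℝ) / 10)) volume 0 b := by
    intro b hb
    refine (intervalIntegral.intervalIntegrable_rpow' (a := 0) (b := b)
      (r := -(9 : ℝ) / 10) (by norm_num)).congr ?_
    intro s hs
    rw [uIoc_of_le hb] at hs
    simp [abs_of_pos hs.1]
  have key' : ∀ b : ℝ, IntervalIntegrable (fun s : ℝ => |s| ^ (-(9 : ℝ) / 10)) volume 0 b := by
    intro b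
    rcases le_total 0 b with hb | hb
    · exact key b hb
    · have := (key (-b) (by linarith)).comp_sub_left 0
      simpa using this
  exact (key' a).symm.trans (key' b)

lemma integral_abs_sub_rpow {c d x : ℝ} (hx : x ∈ Ioo c d) :
    IntegrableOn (fun t => |x - t| ^ (-(9 : ℝ) / 10)) (Ioo c d) ∧
    ∫ t in Ioo c d, |x - t| ^ (-(9 : ℝ) / 10) ≤
      ∫ s in (-(d - c))..(d - c), |s| ^ (-(9 : ℝ) / 10) := by
  have hcd : c ≤ d := (hx.1.trans hx.2).le
  constructor
  · have h := ((intervalIntegrable_abs_rpow (x - c) (x - d)).comp_sub_left x)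
    simp only [sub_sub_cancel] at h
    exact ((intervalIntegrable_iff_integrableOn_Ioc_of_le hcd).1 h).mono_set Ioo_subset_Ioc_self
  · rw [← integral_Ioc_eq_integral_Ioo, ← intervalIntegral.integral_of_le hcd,
      intervalIntegral.integral_comp_sub_left (fun s => |s| ^ (-(9 : ℝ) / 10)) x]
    exact intervalIntegral.integral_mono_interval (by linarith [hx.1]) (by linarith)
      (by linarith [hx.2]) (Filter.Eventually.of_forall fun s => by positivity)
      (intervalIntegrable_abs_rpow _ _)

lemma continuous_kernel {δ : ℝ} (hδ : 0 < δ) (x : ℝ) :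
    Continuous fun t : ℝ => δ / ((x - t) ^ 2 + δ ^ 2) :=
  continuous_const.div (by fun_prop) fun t => by positivity

lemma arctan_le_integral_kernel {c d x δ : ℝ} (hx : x ∈ Ioo c d) (hδ : δ ∈ Ioo (0 : ℝ) 1) :
    Real.arctan ((d - c) / 2) ≤ ∫ t in Ioo c d, δ / ((x - t) ^ 2 + δ ^ 2) := by
  obtain ⟨h0, h1⟩ := hδ
  have hcd : c ≤ d := (hx.1.trans hx.2).le
  have ftc : ∫ t in c..d, δ / ((x - t) ^ 2 + δ ^ 2) =
      Real.arctan ((d - x) / δ) - Real.arctan ((c - x) / δ) := by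
    refine intervalIntegral.integral_eq_sub_of_hasDerivAt
      (f := fun t => Real.arctan ((t - x) / δ)) (fun t _ => ?_)
      ((continuous_kernel h0 x).intervalIntegrable _ _)
    have hd : HasDerivAt (fun t => Real.arctan ((t - x) / δ))
        (1 / (1 + ((t - x) / δ) ^ 2) * (1 / δ)) t :=
      (((hasDerivAt_id t).sub_const x).div_const δ).arctan
    have hval : 1 / (1 + ((t - x) / δ) ^ 2) * (1 / δ) = δ / ((x - t) ^ 2 + δ ^ 2) := by
      have : (x - t) ^ 2 + δ ^ 2 ≠ 0 := by positivity
      have : 1 + ((t - x) / δ) ^ 2 ≠ 0 := by positivity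
      field_simp
      ring
    exact hval ▸ hd
  rw [← integral_Ioc_eq_integral_Ioo, ← intervalIntegral.integral_of_le hcd, ftc]
  have hneg : (c - x) / δ = -((x - c) / δ) := by ring
  rw [hneg, Real.arctan_neg, sub_neg_eq_add]
  have hpos : ∀ y, 0 ≤ y → 0 ≤ Real.arctan y := fun y hy => by
    simpa using Real.arctan_strictMono.monotone hy
  have hmono : ∀ y, (d - c) / 2 ≤ y → Real.arctan ((d - c) / 2) ≤ Real.arctan (y / δ) := by
    intro y hy
    refine Real.arctan_strictMono.monotone (hy.trans ?_)
    rw [le_div_iff₀ h0]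
    nlinarith
  have p1 := hpos ((d - x) / δ) (div_nonneg (by linarith [hx.2]) h0.le)
  have p2 := hpos ((x - c) / δ) (div_nonneg (by linarith [hx.1]) h0.le)
  rcases le_total ((d - c) / 2) (d - x) with h | h
  · linarith [hmono _ h]
  · linarith [hmono (x - c) (by linarith)]

lemma integrableOn_Ioo_of_continuous {f : ℝ → ℝ} (hf : Continuous f) (c d : ℝ) :
    IntegrableOn f (Ioo c d) :=
  (hf.integrableOn_Icc (a := c) (b := d)).mono_set Ioo_subset_Icc_self

lemma pointwise_bound {c d δ : ℝ} (hδ : δ ∈ Ioo (0 : ℝ) 1) {g : ℝ → ℝ}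
    (hg : Differentiable ℝ g)
    (hg' : IntegrableOn (fun t => (deriv g t) ^ 2) (Ioo c d) volume)
    {x : ℝ} (hx : x ∈ Ioo c d) :
    Real.arctan ((d - c) / 2) * |g x| ≤ |Pdelta (Ioo c d) δ g x| +
      (∫ s in (-(d - c))..(d - c), |s| ^ (-(9 : ℝ) / 10)) *
        (δ ^ ((2 : ℝ) / 5) * Real.sqrt (∫ t in Ioo c d, (deriv g t) ^ 2)) := by
  set G := ∫ t in Ioo c d, (deriv g t) ^ 2 with hG
  obtain ⟨hI, hM⟩ := integral_abs_sub_rpow hx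
  have hk := continuous_kernel hδ.1 x
  have hδ5 : 0 < δ ^ ((2 : ℝ) / 5) := Real.rpow_pos_of_pos hδ.1 _
  have hsplit : g x * ∫ t in Ioo c d, δ / ((x - t) ^ 2 + δ ^ 2) =
      Pdelta (Ioo c d) δ g x + ∫ t in Ioo c d, (g x - g t) * (δ / ((x - t) ^ 2 + δ ^ 2)) := by
    have i1 : IntegrableOn (fun t => g t * (δ / ((x - t) ^ 2 + δ ^ 2))) (Ioo c d) :=
      integrableOn_Ioo_of_continuous (hg.continuous.mul hk) c d
    have i2 : IntegrableOn (fun t => (g x - g t) * (δ / ((x - t) ^ 2 + δ ^ 2))) (Ioo c d) :=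
      integrableOn_Ioo_of_continuous ((continuous_const.sub hg.continuous).mul hk) c d
    rw [Pdelta, ← integral_const_mul, ← integral_add i1 i2]
    congr 1
    ext t
    ring
  have herr : |∫ t in Ioo c d, (g x - g t) * (δ / ((x - t) ^ 2 + δ ^ 2))| ≤
      ∫ t in Ioo c d, (δ ^ ((2 : ℝ) / 5) * Real.sqrt G) * |x - t| ^ (-(9 : ℝ) / 10) := by
    rw [← Real.norm_eq_abs]
    refine norm_integral_le_of_norm_le (hI.const_mul _) ?_
    filter_upwards [ae_restrict_mem measurableSet_Ioo] with t ht
    have hkpos : 0 ≤ δ / ((x - t) ^ 2 + δ ^ 2) := div_nonneg hδ.1.le (by positivity)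
    rw [Real.norm_eq_abs, abs_mul, abs_of_nonneg hkpos]
    rcases eq_or_ne x t with rfl | hne
    · simp only [sub_self, abs_zero, zero_mul]; positivity
    · have hh : |g x - g t| ≤ Real.sqrt |x - t| * Real.sqrt G := by
        rw [← Real.sqrt_mul (abs_nonneg _)]
        exact Real.abs_le_sqrt (sq_sub_le hg hg' ht hx)
      calc |g x - g t| * (δ / ((x - t) ^ 2 + δ ^ 2))
          ≤ Real.sqrt |x - t| * Real.sqrt G * (δ / ((x - t) ^ 2 + δ ^ 2)) := by gcongr
        _ = Real.sqrt |x - t| * (δ / ((x - t) ^ 2 + δ ^ 2)) * Real.sqrt G := by ring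
        _ ≤ δ ^ ((2 : ℝ) / 5) * |x - t| ^ (-(9 : ℝ) / 10) * Real.sqrt G := by
            gcongr ?_ * _
            exact sqrt_mul_kernel_le hδ.1 (sub_ne_zero.2 hne)
        _ = _ := by ring
  rw [integral_const_mul] at herr
  have hlow := arctan_le_integral_kernel hx hδ
  have hK0 : 0 ≤ ∫ t in Ioo c d, δ / ((x - t) ^ 2 + δ ^ 2) :=
    integral_nonneg fun t => div_nonneg hδ.1.le (by positivity)
  calc Real.arctan ((d - c) / 2) * |g x|
      ≤ (∫ t in Ioo c d, δ / ((x - t) ^ 2 + δ ^ 2)) * |g x| := by gcongr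
    _ = |g x * ∫ t in Ioo c d, δ / ((x - t) ^ 2 + δ ^ 2)| := by
        rw [abs_mul, abs_of_nonneg hK0, mul_comm]
    _ ≤ |Pdelta (Ioo c d) δ g x| +
        |∫ t in Ioo c d, (g x - g t) * (δ / ((x - t) ^ 2 + δ ^ 2))| := by
        rw [hsplit]; exact abs_add_le _ _
    _ ≤ _ := by
        have : (δ ^ ((2 : ℝ) / 5) * Real.sqrt G) * (∫ t in Ioo c d, |x - t| ^ (-(9 : ℝ) / 10)) ≤
          (δ ^ ((2 : ℝ) / 5) * Real.sqrt G) *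
            ∫ s in (-(d - c))..(d - c), |s| ^ (-(9 : ℝ) / 10) := by gcongr
        linarith

/-- `P_δ g` is bounded and measurable, so its square is integrable on `J`; without this the
integral in the theorem would take its junk value. -/
lemma integrableOn_sq_Pdelta {c d δ : ℝ} (hδ : 0 < δ) {g : ℝ → ℝ} (hg : Continuous g) :
    IntegrableOn (fun x => (Pdelta (Ioo c d) δ g x) ^ 2) (Ioo c d) := by
  have hmeas : StronglyMeasurable (fun x => Pdelta (Ioo c d) δ g x) := by
    have hcont : Continuous fun p : ℝ × ℝ => g p.2 * (δ / ((p.1 - p.2) ^ 2 + δ ^ 2)) :=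
      (hg.comp continuous_snd).mul (continuous_const.div (by fun_prop) fun p => by positivity)
    exact hcont.stronglyMeasurable.integral_prod_right (ν := volume.restrict (Ioo c d))
  have hbound : ∀ x, |Pdelta (Ioo c d) δ g x| ≤ ∫ t in Ioo c d, |g t| * (1 / δ) := by
    intro x
    rw [Pdelta, ← Real.norm_eq_abs]
    refine norm_integral_le_of_norm_le
      (integrableOn_Ioo_of_continuous (hg.abs.mul continuous_const) c d) ?_
    refine Filter.Eventually.of_forall fun t => ?_
    have hkpos : 0 ≤ δ / ((x - t) ^ 2 + δ ^ 2) := div_nonneg hδ.le (by positivity)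
    rw [Real.norm_eq_abs, abs_mul, abs_of_nonneg hkpos]
    refine mul_le_mul_of_nonneg_left ?_ (abs_nonneg _)
    rw [div_le_div_iff₀ (by positivity) hδ]
    nlinarith [sq_nonneg (x - t)]
  refine Measure.integrableOn_of_bounded (M := (∫ t in Ioo c d, |g t| * (1 / δ)) ^ 2)
    measure_Ioo_lt_top.ne (hmeas.pow 2).aestronglyMeasurable
    (Filter.Eventually.of_forall fun x => ?_)
  rw [Real.norm_eq_abs, abs_pow]
  gcongr
  exact hbound x

theorem stmt_7 (c d : ℝ) (hcd : c < d) :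
    ∃ C : ℝ, 1 < C ∧
      ∀ δ : ℝ, δ ∈ Ioo (0 : ℝ) 1 →
      ∀ g : ℝ → ℝ, Differentiable ℝ g →
        IntegrableOn (fun t => (g t) ^ 2) (Ioo c d) volume →
        IntegrableOn (fun t => (deriv g t) ^ 2) (Ioo c d) volume →
        Real.sqrt (∫ t in Ioo c d, (g t) ^ 2) ≤
          C * (Real.sqrt (∫ x in Ioo c d, (Pdelta (Ioo c d) δ g x) ^ 2) +
            δ ^ ((2 : ℝ) / 5) * Real.sqrt (∫ t in Ioo c d, (g t) ^ 2) +
            δ ^ ((2 : ℝ) / 5) * Real.sqrt (∫ t in Ioo c d, (deriv g t) ^ 2)) := by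
  have hL : 0 < d - c := sub_pos.2 hcd
  have hκ : 0 < Real.arctan ((d - c) / 2) := by
    simpa using Real.arctan_strictMono (half_pos hL)
  set κ := Real.arctan ((d - c) / 2) with hκdef
  set M := ∫ s in (-(d - c))..(d - c), |s| ^ (-(9 : ℝ) / 10) with hMdef
  set A := (2 + 2 * M ^ 2 * (d - c)) / κ ^ 2 with hA
  have hApos : 0 < A := by positivity
  refine ⟨1 + A, by linarith, fun δ hδ g hg hg2 hg' => ?_⟩
  set p := Real.sqrt (∫ x in Ioo c d, (Pdelta (Ioo c d) δ g x) ^ 2) with hp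
  set q := δ ^ ((2 : ℝ) / 5) * Real.sqrt (∫ t in Ioo c d, (deriv g t) ^ 2) with hq
  have hδ5 : 0 < δ ^ ((2 : ℝ) / 5) := Real.rpow_pos_of_pos hδ.1 _
  have hp0 : 0 ≤ p := Real.sqrt_nonneg _
  have hq0 : 0 ≤ q := by positivity
  have hP := integrableOn_sq_Pdelta (c := c) (d := d) hδ.1 hg.continuous
  have hInt : ∫ t in Ioo c d, κ ^ 2 * (g t) ^ 2 ≤
      ∫ t in Ioo c d, (2 * (Pdelta (Ioo c d) δ g t) ^ 2 + 2 * (M * q) ^ 2) := by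
    refine setIntegral_mono_on (hg2.const_mul _)
      ((hP.const_mul 2).add (integrableOn_Ioo_of_continuous continuous_const c d))
      measurableSet_Ioo fun x hx => ?_
    have hpt : κ * |g x| ≤ |Pdelta (Ioo c d) δ g x| + M * q := pointwise_bound hδ hg hg' hx
    have hsq := pow_le_pow_left₀ (by positivity) hpt 2
    rw [mul_pow, sq_abs] at hsq
    nlinarith [sq_nonneg (|Pdelta (Ioo c d) δ g x| - M * q), sq_abs (Pdelta (Ioo c d) δ g x)]
  have hpsq : ∫ x in Ioo c d, (Pdelta (Ioo c d) δ g x) ^ 2 = p ^ 2 :=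
    (Real.sq_sqrt (integral_nonneg fun _ => sq_nonneg _)).symm
  rw [integral_const_mul, integral_add (hP.const_mul 2)
    (integrableOn_Ioo_of_continuous continuous_const c d), integral_const_mul, hpsq,
    setIntegral_const, Real.volume_real_Ioo_of_le hcd.le, smul_eq_mul] at hInt
  have hgA : ∫ t in Ioo c d, (g t) ^ 2 ≤ A * (p ^ 2 + q ^ 2) := by
    rw [hA, div_mul_eq_mul_div, le_div_iff₀ (by positivity)]
    nlinarith [mul_nonneg (mul_nonneg (sq_nonneg M) hL.le) (sq_nonneg p), sq_nonneg q]
  have hmain : Real.sqrt (∫ t in Ioo c d, (g t) ^ 2) ≤ (1 + A) * (p + q) := by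
    refine Real.sqrt_le_iff.2 ⟨by positivity, hgA.trans ?_⟩
    rw [mul_pow (1 + A)]
    have : p ^ 2 + q ^ 2 ≤ (p + q) ^ 2 := by nlinarith [mul_nonneg hp0 hq0]
    exact mul_le_mul (by nlinarith) this (by positivity) (by positivity)
  refine hmain.trans (mul_le_mul_of_nonneg_left ?_ (by linarith))
  have : 0 ≤ δ ^ ((2 : ℝ) / 5) * Real.sqrt (∫ t in Ioo c d, (g t) ^ 2) := by positivity
  linarith
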